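/- Let d ≥ 1, let b : ℝ^d → ℝ^d satisfy Assumptions (A) and set M₁ := K/2, M₂ := L·(max(R, 2|b(0)|/K))² + |b(0)|·max(R, 2|b(0)|/K). Let E be a measurable space, b̄ : ℝ^d × E → ℝ^d measurable, and let σ, α > 0. On a probability space let (ξ_k)_{k≥1} be i.i.d. with law the d-fold product of standard Gaussians N(0,1), let (U_k)_{k≥0} be i.i.d. E-valued random variables, and let X̄₀ be an ℝ^d-valued random variable with 𝔼|X̄₀|² < ∞, with X̄₀, (ξ_k), (U_k) jointly independent; assume that for all x ∈ ℝ^d and all k: 𝔼[b̄(x, U_k)] = b(x) and 𝔼|b̄(x, U_k) − b(x)|² ≤ σ²(1 + |x|²)·h^α. Define the randomized Euler chain X̄_{k+1} := X̄_k + h·b̄(X̄_k, U_k) + √h·ξ_{k+1} for k ≥ 0. Then for every h with 0 < h < min(K/(4L² + 2σ²), 1) and every k ≥ 1: 𝔼|X̄_k|² ≤ 𝔼|X̄₀|² + (2h|b(0)|² + d + M₂ + hσ²)/(M₁ − 2hL² − hσ²). -/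

import Mathlib

open scoped Classical
open MeasureTheory ProbabilityTheory

/-- Standard Gaussian measure `N(0, I)` on `EuclideanSpace ℝ (Fin d)`
(the `d`-fold product of standard Gaussians `N(0,1)`). -/
noncomputable def stdGaussian (d : ℕ) : Measure (EuclideanSpace ℝ (Fin d)) :=
  (Measure.pi fun _ : Fin d => gaussianReal 0 1).map
    (MeasurableEquiv.toLp 2 (Fin d → ℝ))

theorem aux_lyap {d : ℕ} (b : EuclideanSpace ℝ (Fin d) → EuclideanSpace ℝ (Fin d))
    (L K R : ℝ) (hL : 0 < L) (hK : 0 < K) (hR : 0 < R)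
    (hLip : ∀ x y : EuclideanSpace ℝ (Fin d), ‖b x - b y‖ ≤ L * ‖x - y‖)
    (hContr : ∀ x y : EuclideanSpace ℝ (Fin d), R < ‖x - y‖ →
      @inner ℝ _ _ (x - y) (b x - b y) ≤ -K * ‖x - y‖ ^ 2)
    (x : EuclideanSpace ℝ (Fin d)) :
    @inner ℝ _ _ x (b x) ≤ (L * (max R (2 * ‖b 0‖ / K)) ^ 2
      + ‖b 0‖ * max R (2 * ‖b 0‖ / K)) - K / 2 * ‖x‖ ^ 2 := by
  set r := max R (2 * ‖b 0‖ / K) with hr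
  have hrR : R ≤ r := le_max_left _ _
  have hr2 : 2 * ‖b 0‖ ≤ K * r := by
    have : 2 * ‖b 0‖ / K ≤ r := le_max_right _ _
    rw [div_le_iff₀ hK] at this
    linarith
  have hr0 : 0 < r := lt_of_lt_of_le hR hrR
  have hb0 : 0 ≤ ‖b 0‖ := norm_nonneg _
  -- drift bound outside the ball
  have key : ∀ y : EuclideanSpace ℝ (Fin d), R < ‖y‖ →
      @inner ℝ _ _ y (b y) ≤ -K * ‖y‖ ^ 2 + ‖b 0‖ * ‖y‖ := by
    intro y hy
    have h1 := hContr y 0 (by simpa using hy)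
    simp only [sub_zero] at h1
    rw [inner_sub_right] at h1
    have h2 := real_inner_le_norm y (b 0)
    linarith
  by_cases hx : r < ‖x‖
  · have h1 := key x (lt_of_le_of_lt hrR hx)
    have h2 : ‖b 0‖ * ‖x‖ ≤ K / 2 * ‖x‖ ^ 2 := by
      have : ‖b 0‖ ≤ K / 2 * ‖x‖ := by nlinarith
      nlinarith [norm_nonneg x]
    have : 0 ≤ L * r ^ 2 + ‖b 0‖ * r := by positivity
    linarith
  · push Not at hx
    by_cases hx0 : x = 0
    · subst hx0
      simp only [inner_zero_left, norm_zero]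
      have : 0 ≤ L * r ^ 2 + ‖b 0‖ * r := by positivity
      linarith
    · have ht : 0 < ‖x‖ := norm_pos_iff.2 hx0
      set t := ‖x‖ with htdef
      set s : ℝ := 2 * r / t with hs
      have hs1 : 1 ≤ s := by
        rw [hs, le_div_iff₀ ht]; linarith
      have hst : s * t = 2 * r := by rw [hs]; field_simp
      have hyn : ‖s • x‖ = 2 * r := by
        rw [norm_smul, Real.norm_of_nonneg (by linarith)]; exact hst
      have h1 := key (s • x) (by rw [hyn]; linarith)
      rw [hyn, real_inner_smul_left] at h1
      have h2 : @inner ℝ _ _ x (b (s • x)) ≤ -K * (2 * r) * t + ‖b 0‖ * t := by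
        have : s * @inner ℝ _ _ x (b (s • x)) ≤ s * (-K * (2 * r) * t + ‖b 0‖ * t) := by
          calc _ ≤ _ := h1
            _ = _ := by rw [← hst]; ring
        exact le_of_mul_le_mul_left this (by linarith)
      have h3 : @inner ℝ _ _ x (b x - b (s • x)) ≤ t * (L * (2 * r - t)) := by
        refine (real_inner_le_norm _ _).trans ?_
        refine mul_le_mul_of_nonneg_left ?_ ht.le
        refine (hLip _ _).trans (le_of_eq ?_)
        have : x - s • x = (1 - s) • x := by rw [sub_smul, one_smul]
        rw [this, norm_smul, Real.norm_of_nonpos (by linarith), ← htdef, ← hst]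
        ring
      rw [inner_sub_right] at h3
      nlinarith [mul_nonneg hL.le (sq_nonneg (r - t)), mul_nonneg hb0 (sub_nonneg.2 hx),
        mul_nonneg (mul_nonneg hK.le ht.le) (sub_nonneg.2 hx), mul_pos (mul_pos hK ht) hr0]

theorem aux_K_le_L {d : ℕ} (hd : 1 ≤ d) (b : EuclideanSpace ℝ (Fin d) → EuclideanSpace ℝ (Fin d))
    (L K R : ℝ) (hR : 0 < R)
    (hLip : ∀ x y : EuclideanSpace ℝ (Fin d), ‖b x - b y‖ ≤ L * ‖x - y‖)
    (hContr : ∀ x y : EuclideanSpace ℝ (Fin d), R < ‖x - y‖ →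
      @inner ℝ _ _ (x - y) (b x - b y) ≤ -K * ‖x - y‖ ^ 2) : K ≤ L := by
  let x : EuclideanSpace ℝ (Fin d) := EuclideanSpace.single ⟨0, hd⟩ (R + 1)
  have hx : ‖x‖ = R + 1 := by
    simp only [x, PiLp.norm_single]
    exact Real.norm_of_nonneg (by linarith)
  have h1 := hContr x 0 (by rw [sub_zero, hx]; linarith)
  have h2 := hLip x 0
  have h3 := abs_le.1 (abs_real_inner_le_norm (x - 0) (b x - b 0))
  rw [sub_zero, hx] at *
  have h4 : (R + 1) * ‖b x - b 0‖ ≤ (R + 1) * (L * (R + 1)) :=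
    mul_le_mul_of_nonneg_left h2 (by linarith)
  have : K * (R + 1) ^ 2 ≤ L * (R + 1) ^ 2 := by nlinarith [h3.1]
  exact le_of_mul_le_mul_right this (by positivity)

theorem aux_coord_law {d : ℕ} {Ω : Type*} [MeasurableSpace Ω] (P : Measure Ω)
    (W : Ω → EuclideanSpace ℝ (Fin d)) (hW : Measurable W)
    (hlaw : Measure.map W P = _root_.stdGaussian d) (i : Fin d) :
    Measure.map (fun ω => W ω i) P = gaussianReal 0 1 := by
  have h1 : Measurable (fun x : EuclideanSpace ℝ (Fin d) => x i) := by fun_prop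
  have h2 : Measure.map (fun ω => W ω i) P
      = Measure.map (fun x : EuclideanSpace ℝ (Fin d) => x i) (Measure.map W P) := by
    rw [Measure.map_map h1 hW]; rfl
  rw [h2, hlaw, _root_.stdGaussian, Measure.map_map h1 (MeasurableEquiv.measurable _)]
  exact (measurePreserving_eval (fun _ : Fin d => gaussianReal 0 1) i).map_eq

theorem aux_coord_facts {d : ℕ} {Ω : Type*} [MeasurableSpace Ω] (P : Measure Ω)
    (W : Ω → EuclideanSpace ℝ (Fin d)) (hW : Measurable W)
    (hlaw : Measure.map W P = _root_.stdGaussian d) (i : Fin d) :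
    MemLp (fun ω => W ω i) 2 P ∧ ∫ ω, W ω i ∂P = 0 ∧ ∫ ω, (W ω i) ^ 2 ∂P = 1 := by
  have hm : Measurable (fun ω => W ω i) := by fun_prop
  have hl := aux_coord_law P W hW hlaw i
  refine ⟨?_, ?_, ?_⟩
  · have h := memLp_id_gaussianReal (μ := 0) (v := 1) 2
    rw [← hl] at h
    exact (memLp_map_measure_iff (by fun_prop) hm.aemeasurable).1 h
  · have h := integral_id_gaussianReal (μ := 0) (v := 1)
    rw [← hl, integral_map hm.aemeasurable (by fun_prop)] at h
    exact h
  · have h := variance_fun_id_gaussianReal (μ := 0) (v := 1)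
    rw [variance_of_integral_eq_zero (by fun_prop) integral_id_gaussianReal,
      ← hl, integral_map hm.aemeasurable (by fun_prop)] at h
    simpa using h

theorem aux_noise {d : ℕ} {Ω : Type*} [MeasurableSpace Ω] (P : Measure Ω) [IsProbabilityMeasure P]
    (V W : Ω → EuclideanSpace ℝ (Fin d)) (hV : Measurable V) (hW : Measurable W)
    (hlaw : Measure.map W P = _root_.stdGaussian d) (hind : IndepFun V W P)
    (h : ℝ) (hh : 0 < h)
    (hint : Integrable (fun ω => ‖V ω + Real.sqrt h • W ω‖ ^ 2) P) :
    Integrable (fun ω => ‖V ω‖ ^ 2) P ∧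
    ∫ ω, ‖V ω + Real.sqrt h • W ω‖ ^ 2 ∂P = ∫ ω, ‖V ω‖ ^ 2 ∂P + h * d := by
  have hsum : ∀ x : EuclideanSpace ℝ (Fin d), ‖x‖ ^ 2 = ∑ i, (x i) ^ 2 := by
    intro x; rw [EuclideanSpace.norm_sq_eq]; simp
  have hWL : MemLp W 2 P := by
    rw [memLp_two_iff_integrable_sq_norm hW.aestronglyMeasurable]
    simp_rw [hsum]
    exact integrable_finsetSum _ fun i _ => (aux_coord_facts P W hW hlaw i).1.integrable_sq
  have hSL : MemLp (fun ω => V ω + Real.sqrt h • W ω) 2 P := by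
    rw [memLp_two_iff_integrable_sq_norm (by fun_prop)]
    exact hint
  have hVL : MemLp V 2 P := by
    have := hSL.sub (hWL.const_smul (Real.sqrt h))
    have he : V = (fun ω => V ω + Real.sqrt h • W ω) - Real.sqrt h • W := by
      funext ω
      simp
    rw [he]
    exact this
  have hVc : ∀ i, MemLp (fun ω => V ω i) 2 P := by
    intro i
    refine hVL.mono (by fun_prop) (Filter.Eventually.of_forall fun ω => ?_)
    exact PiLp.norm_apply_le (V ω) i
  have hVi : Integrable (fun ω => ‖V ω‖ ^ 2) P :=
    (memLp_two_iff_integrable_sq_norm hV.aestronglyMeasurable).1 hVL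
  refine ⟨hVi, ?_⟩
  have hs : Real.sqrt h ^ 2 = h := Real.sq_sqrt hh.le
  have hexp : ∀ ω, ‖V ω + Real.sqrt h • W ω‖ ^ 2
      = ‖V ω‖ ^ 2 + ∑ i, (2 * Real.sqrt h * (V ω i * W ω i) + h * (W ω i) ^ 2) := by
    intro ω
    rw [hsum, hsum, ← Finset.sum_add_distrib]
    refine Finset.sum_congr rfl fun i _ => ?_
    simp only [PiLp.add_apply, PiLp.smul_apply, smul_eq_mul]
    linear_combination (W ω i) ^ 2 * hs
  simp_rw [hexp]
  have hterm : ∀ i, Integrable (fun ω => 2 * Real.sqrt h * (V ω i * W ω i) + h * (W ω i) ^ 2) P :=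
    fun i => (((hVc i).integrable_mul (aux_coord_facts P W hW hlaw i).1).const_mul _).add
      ((aux_coord_facts P W hW hlaw i).1.integrable_sq.const_mul _)
  rw [integral_add hVi (integrable_finsetSum _ fun i _ => hterm i),
    integral_finsetSum _ fun i _ => hterm i]
  congr 1
  have : ∀ i : Fin d, ∫ ω, (2 * Real.sqrt h * (V ω i * W ω i) + h * (W ω i) ^ 2) ∂P = h := by
    intro i
    obtain ⟨f1, f2, f3⟩ := aux_coord_facts P W hW hlaw i
    have hi : IndepFun (fun ω => V ω i) (fun ω => W ω i) P :=
      hind.comp (φ := fun x : EuclideanSpace ℝ (Fin d) => x i)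
        (ψ := fun x : EuclideanSpace ℝ (Fin d) => x i) (by fun_prop) (by fun_prop)
    have g1 : Integrable (fun ω => V ω i * W ω i) P := (hVc i).integrable_mul f1
    rw [integral_add (g1.const_mul _) (f1.integrable_sq.const_mul _),
      integral_const_mul, integral_const_mul, f3,
      hi.integral_fun_mul_eq_mul_integral (by fun_prop) (by fun_prop), f2]
    ring
  simp [this, mul_comm]

/-- one-point bias-variance decomposition -/
theorem aux_biasvar {d : ℕ} {E : Type*} [MeasurableSpace E] (ν : Measure E)
    [IsProbabilityMeasure ν] (f : E → EuclideanSpace ℝ (Fin d)) (hf : Measurable f)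
    (x c : EuclideanSpace ℝ (Fin d)) (h : ℝ) (hh : 0 < h)
    (hint : Integrable (fun u => ‖x + h • f u‖ ^ 2) ν) (hc : ∫ u, f u ∂ν = c) :
    ∫ u, ‖x + h • f u‖ ^ 2 ∂ν = ‖x + h • c‖ ^ 2 + h ^ 2 * ∫ u, ‖f u - c‖ ^ 2 ∂ν := by
  have h1 : MemLp (fun u => x + h • f u) 2 ν := by
    rw [memLp_two_iff_integrable_sq_norm (by fun_prop)]; exact hint
  have hfL : MemLp f 2 ν := by
    have := (h1.sub (memLp_const x)).const_smul h⁻¹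
    have he : f = h⁻¹ • ((fun u => x + h • f u) - fun _ => x) := by
      funext u
      simp [smul_smul, inv_mul_cancel₀ hh.ne']
    rw [he]
    exact this
  have hgL : MemLp (fun u => f u - c) 2 ν := hfL.sub (memLp_const c)
  have hgi : Integrable (fun u => f u - c) ν := hgL.integrable (by norm_num)
  have hg2 : Integrable (fun u => ‖f u - c‖ ^ 2) ν :=
    (memLp_two_iff_integrable_sq_norm hgL.1).1 hgL
  have hexp : ∀ u, ‖x + h • f u‖ ^ 2 = ‖x + h • c‖ ^ 2
      + 2 * h * @inner ℝ _ _ (x + h • c) (f u - c) + h ^ 2 * ‖f u - c‖ ^ 2 := by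
    intro u
    have : x + h • f u = (x + h • c) + h • (f u - c) := by rw [smul_sub]; abel
    rw [this, norm_add_sq_real, real_inner_smul_right, norm_smul, mul_pow]
    simp only [Real.norm_eq_abs, sq_abs]
    ring
  simp_rw [hexp]
  have hin : Integrable (fun u => @inner ℝ _ _ (x + h • c) (f u - c)) ν := hgi.const_inner _
  have hsumi : Integrable (fun u => ‖x + h • c‖ ^ 2
      + 2 * h * @inner ℝ _ _ (x + h • c) (f u - c)) ν :=
    (integrable_const _).add (hin.const_mul _)
  rw [integral_add hsumi (hg2.const_mul _),
    integral_add (integrable_const _) (hin.const_mul _), integral_const_mul, integral_const_mul,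
    integral_inner hgi, integral_sub (hfL.integrable (by norm_num)) (integrable_const _), hc]
  simp

/-- one-step drift bound, in the law of `(X, U)`. -/
theorem aux_drift {d : ℕ} (b : EuclideanSpace ℝ (Fin d) → EuclideanSpace ℝ (Fin d))
    (L K M σ h : ℝ) (hL : 0 < L) (hh : 0 < h) (hhL : h * L < 1 / 2)
    (hLip : ∀ x y : EuclideanSpace ℝ (Fin d), ‖b x - b y‖ ≤ L * ‖x - y‖)
    (hlyap : ∀ x, @inner ℝ _ _ x (b x) ≤ M - K / 2 * ‖x‖ ^ 2)
    {E : Type*} [MeasurableSpace E]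
    (bb : EuclideanSpace ℝ (Fin d) → E → EuclideanSpace ℝ (Fin d))
    (hbbmeas : Measurable (Function.uncurry bb))
    (μ : Measure (EuclideanSpace ℝ (Fin d))) [IsProbabilityMeasure μ]
    (ν : Measure E) [IsProbabilityMeasure ν]
    (hUn : ∀ x, ∫ u, bb x u ∂ν = b x)
    (hVar : ∀ x, ∫ u, ‖bb x u - b x‖ ^ 2 ∂ν ≤ σ ^ 2 * (1 + ‖x‖ ^ 2))
    (hint : Integrable (fun p : EuclideanSpace ℝ (Fin d) × E => ‖p.1 + h • bb p.1 p.2‖ ^ 2)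
      (μ.prod ν)) :
    Integrable (fun x => ‖x‖ ^ 2) μ ∧
    ∫ p, ‖p.1 + h • bb p.1 p.2‖ ^ 2 ∂(μ.prod ν) ≤
      (1 - h * K + 2 * h ^ 2 * L ^ 2 + h ^ 2 * σ ^ 2) * ∫ x, ‖x‖ ^ 2 ∂μ
        + h * (2 * M + 2 * h * ‖b 0‖ ^ 2 + h * σ ^ 2) := by
  have hbm : Measurable b := by
    have : LipschitzWith (Real.toNNReal L) b := by
      refine LipschitzWith.of_dist_le_mul fun x y => ?_
      rw [dist_eq_norm, dist_eq_norm, Real.coe_toNNReal _ hL.le]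
      exact hLip x y
    exact this.continuous.measurable
  have hae := hint.prod_right_ae
  have hG := hint.integral_prod_left
  have heq : ∀ᵐ x ∂μ, ∫ u, ‖x + h • bb x u‖ ^ 2 ∂ν
      = ‖x + h • b x‖ ^ 2 + h ^ 2 * ∫ u, ‖bb x u - b x‖ ^ 2 ∂ν := by
    filter_upwards [hae] with x hx
    exact aux_biasvar ν (bb x) (hbbmeas.comp measurable_prodMk_left) x (b x) h hh hx (hUn x)
  have hb : ∀ x, ‖b x‖ ≤ L * ‖x‖ + ‖b 0‖ := by
    intro x
    have h1 := hLip x 0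
    rw [sub_zero] at h1
    have h2 := norm_sub_norm_le (b x) (b 0)
    linarith
  have hlow : ∀ x, ‖x‖ ^ 2 ≤ 8 * ‖x + h • b x‖ ^ 2 + 8 * h ^ 2 * ‖b 0‖ ^ 2 := by
    intro x
    have h1 : ‖x‖ ≤ ‖x + h • b x‖ + h * ‖b x‖ := by
      have := norm_sub_le (x + h • b x) (h • b x)
      rw [add_sub_cancel_right, norm_smul, Real.norm_of_nonneg hh.le] at this
      exact this
    have h2 : h * ‖b x‖ ≤ 1 / 2 * ‖x‖ + h * ‖b 0‖ := by
      have := mul_le_mul_of_nonneg_left (hb x) hh.le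
      nlinarith [norm_nonneg x]
    have h3 : ‖x‖ ≤ 2 * (‖x + h • b x‖ + h * ‖b 0‖) := by linarith
    have h4 : ‖x‖ ^ 2 ≤ (2 * (‖x + h • b x‖ + h * ‖b 0‖)) ^ 2 :=
      pow_le_pow_left₀ (norm_nonneg _) h3 2
    nlinarith [sq_nonneg (‖x + h • b x‖ - h * ‖b 0‖)]
  have hX2 : Integrable (fun x : EuclideanSpace ℝ (Fin d) => ‖x‖ ^ 2) μ := by
    refine ((hG.const_mul 8).add (integrable_const (8 * h ^ 2 * ‖b 0‖ ^ 2))).mono'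
      (by fun_prop) ?_
    filter_upwards [heq] with x hx
    rw [Real.norm_of_nonneg (by positivity)]
    refine (hlow x).trans ?_
    simp only [Pi.add_apply]
    rw [hx]
    have : 0 ≤ ∫ u, ‖bb x u - b x‖ ^ 2 ∂ν := integral_nonneg fun u => by positivity
    nlinarith [mul_nonneg (sq_nonneg h) this]
  refine ⟨hX2, ?_⟩
  rw [integral_prod _ hint]
  have hup : ∀ᵐ x ∂μ, ∫ u, ‖x + h • bb x u‖ ^ 2 ∂ν ≤
      (1 - h * K + 2 * h ^ 2 * L ^ 2 + h ^ 2 * σ ^ 2) * ‖x‖ ^ 2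
        + h * (2 * M + 2 * h * ‖b 0‖ ^ 2 + h * σ ^ 2) := by
    filter_upwards [heq] with x hx
    rw [hx, norm_add_sq_real, real_inner_smul_right, norm_smul, mul_pow]
    simp only [Real.norm_eq_abs, sq_abs]
    have h1 : ‖b x‖ ^ 2 ≤ 2 * L ^ 2 * ‖x‖ ^ 2 + 2 * ‖b 0‖ ^ 2 := by
      have := pow_le_pow_left₀ (norm_nonneg _) (hb x) 2
      nlinarith [sq_nonneg (L * ‖x‖ - ‖b 0‖)]
    have e1 := mul_le_mul_of_nonneg_left h1 (sq_nonneg h)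
    have e2 := mul_le_mul_of_nonneg_left (hVar x) (sq_nonneg h)
    have e3 := mul_le_mul_of_nonneg_left (hlyap x) hh.le
    nlinarith
  refine (integral_mono_ae hG ((hX2.const_mul _).add (integrable_const _)) hup).trans
    (le_of_eq ?_)
  rw [integral_add' (hX2.const_mul _) (integrable_const _), integral_const_mul]
  simp

/-- **Lemma (uniform-in-time second-moment bound for the randomized Euler chain).**
Under the Lipschitz and contractivity-at-infinity assumptions on `b`, with
`M₁ = K/2` and `M₂ = L (max(R, 2‖b 0‖/K))² + ‖b 0‖ max(R, 2‖b 0‖/K)`, the randomized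
Euler chain `X̄_{k+1} = X̄_k + h b̄(X̄_k, U_k) + √h ξ_{k+1}`, with `X̄₀, (ξ_k), (U_k)`
jointly independent, `b̄(·, U_k)` an unbiased estimator of `b` with variance bounded by
`σ²(1 + ‖x‖²)h^α`, satisfies for every `0 < h < min(K/(4L² + 2σ²), 1)` and `k ≥ 1`:
`𝔼‖X̄_k‖² ≤ 𝔼‖X̄₀‖² + (2h‖b 0‖² + d + M₂ + hσ²)/(M₁ - 2hL² - hσ²)`. -/
theorem randomized_euler_chain_uniform_second_moment
    {d : ℕ} (hd : 1 ≤ d) (b : EuclideanSpace ℝ (Fin d) → EuclideanSpace ℝ (Fin d))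
    (L K R : ℝ) (hL : 0 < L) (hK : 0 < K) (hR : 0 < R)
    (hLip : ∀ x y : EuclideanSpace ℝ (Fin d), ‖b x - b y‖ ≤ L * ‖x - y‖)
    (hContr : ∀ x y : EuclideanSpace ℝ (Fin d), R < ‖x - y‖ →
      @inner ℝ _ _ (x - y) (b x - b y) ≤ -K * ‖x - y‖ ^ 2)
    {E : Type*} [MeasurableSpace E]
    (bb : EuclideanSpace ℝ (Fin d) → E → EuclideanSpace ℝ (Fin d))
    (hbbmeas : Measurable (Function.uncurry bb))
    (σ α : ℝ) (hσ : 0 < σ) (hα : 0 < α)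
    (h : ℝ) (hh : 0 < h) (hh' : h < min (K / (4 * L ^ 2 + 2 * σ ^ 2)) 1)
    {Ω : Type*} [MeasureSpace Ω] [IsProbabilityMeasure (ℙ : Measure Ω)]
    (Xb : ℕ → Ω → EuclideanSpace ℝ (Fin d)) (ξ : ℕ → Ω → EuclideanSpace ℝ (Fin d))
    (U : ℕ → Ω → E)
    (hXmeas : Measurable (Xb 0)) (hξmeas : ∀ k, Measurable (ξ k))
    (hUmeas : ∀ k, Measurable (U k))
    (hX0sq : Integrable (fun ω => ‖Xb 0 ω‖ ^ 2) ℙ)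
    (hξlaw : ∀ k, 1 ≤ k → Measure.map (ξ k) ℙ = stdGaussian d)
    (hUiid : ∀ j k, Measure.map (U j) ℙ = Measure.map (U k) ℙ)
    (hIndep : iIndep (fun i : Option (ℕ ⊕ ℕ) =>
        i.elim (MeasurableSpace.comap (Xb 0) inferInstance)
          (Sum.elim (fun k => MeasurableSpace.comap (ξ k) inferInstance)
            (fun k => MeasurableSpace.comap (U k) inferInstance))) ℙ)
    (hUnbiased : ∀ (x : EuclideanSpace ℝ (Fin d)) (k : ℕ),
      ∫ ω, bb x (U k ω) ∂ℙ = b x)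
    (hVar : ∀ (x : EuclideanSpace ℝ (Fin d)) (k : ℕ),
      ∫ ω, ‖bb x (U k ω) - b x‖ ^ 2 ∂ℙ ≤ σ ^ 2 * (1 + ‖x‖ ^ 2) * h ^ α)
    (hrec : ∀ (k : ℕ) (ω : Ω),
      Xb (k + 1) ω = Xb k ω + h • bb (Xb k ω) (U k ω) + Real.sqrt h • ξ (k + 1) ω)
    (k : ℕ) (hk : 1 ≤ k) :
    ∫ ω, ‖Xb k ω‖ ^ 2 ∂ℙ
      ≤ ∫ ω, ‖Xb 0 ω‖ ^ 2 ∂ℙ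
        + (2 * h * ‖b 0‖ ^ 2 + d
            + (L * (max R (2 * ‖b 0‖ / K)) ^ 2 + ‖b 0‖ * max R (2 * ‖b 0‖ / K))
            + h * σ ^ 2)
          / (K / 2 - 2 * h * L ^ 2 - h * σ ^ 2) := by
  set M := L * (max R (2 * ‖b 0‖ / K)) ^ 2 + ‖b 0‖ * max R (2 * ‖b 0‖ / K) with hM
  have hKL := aux_K_le_L hd b L K R hR hLip hContr
  have hM0 : 0 ≤ M := by
    have : 0 ≤ max R (2 * ‖b 0‖ / K) := hR.le.trans (le_max_left _ _)
    positivity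
  have h1 : h < 1 := hh'.trans_le (min_le_right _ _)
  have h2 : h * (4 * L ^ 2 + 2 * σ ^ 2) < K := by
    have := hh'.trans_le (min_le_left _ _)
    rwa [lt_div_iff₀ (by positivity)] at this
  have hhL : h * L < 1 / 4 := by
    have h3 : h * (4 * L ^ 2) < L := by nlinarith [mul_pos hh (pow_pos hσ 2)]
    have : L * (h * L) < L * (1 / 4) := by nlinarith
    exact lt_of_mul_lt_mul_left this hL.le
  have hc : 0 < K / 2 - 2 * h * L ^ 2 - h * σ ^ 2 := by nlinarith
  set c := K / 2 - 2 * h * L ^ 2 - h * σ ^ 2 with hcdef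
  set N := 2 * h * ‖b 0‖ ^ 2 + d + M + h * σ ^ 2 with hN
  have hN0 : 0 ≤ N := by positivity
  have hNc : 0 ≤ N / c := by positivity
  have he0 : 0 ≤ ∫ ω, ‖Xb 0 ω‖ ^ 2 := integral_nonneg fun ω => by positivity
  have hpow : h ^ α ≤ 1 := Real.rpow_le_one hh.le h1.le hα.le
  -- filtration
  set m : Option (ℕ ⊕ ℕ) → MeasurableSpace Ω := fun i : Option (ℕ ⊕ ℕ) =>
        i.elim (MeasurableSpace.comap (Xb 0) inferInstance)
          (Sum.elim (fun k => MeasurableSpace.comap (ξ k) inferInstance)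
            (fun k => MeasurableSpace.comap (U k) inferInstance)) with hm
  have hmle : ∀ i, m i ≤ (inferInstance : MeasurableSpace Ω) := by
    rintro (_ | _ | _)
    · exact hXmeas.comap_le
    · exact (hξmeas _).comap_le
    · exact (hUmeas _).comap_le
  let S : ℕ → Set (Option (ℕ ⊕ ℕ)) := fun n =>
    {i | i = none ∨ (∃ j, j ≤ n ∧ i = some (Sum.inl j)) ∨ (∃ j, j < n ∧ i = some (Sum.inr j))}
  let T : ℕ → Set (Option (ℕ ⊕ ℕ)) := fun n =>
    {i | i = none ∨ (∃ j, j ≤ n ∧ i = some (Sum.inl j)) ∨ (∃ j, j ≤ n ∧ i = some (Sum.inr j))}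
  have hsub : ∀ (A B : Set (Option (ℕ ⊕ ℕ))), A ⊆ B → (⨆ i ∈ A, m i) ≤ ⨆ i ∈ B, m i :=
    fun A B hAB => biSup_mono fun i hi => hAB hi
  have hST : ∀ n, S n ⊆ T n := by
    rintro n i (hi | ⟨j, hj, hi⟩ | ⟨j, hj, hi⟩)
    · exact Or.inl hi
    · exact Or.inr (Or.inl ⟨j, hj, hi⟩)
    · exact Or.inr (Or.inr ⟨j, hj.le, hi⟩)
  have hTS : ∀ n, T n ⊆ S (n + 1) := by
    rintro n i (hi | ⟨j, hj, hi⟩ | ⟨j, hj, hi⟩)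
    · exact Or.inl hi
    · exact Or.inr (Or.inl ⟨j, by omega, hi⟩)
    · exact Or.inr (Or.inr ⟨j, by omega, hi⟩)
  have hξm : ∀ (A : Set (Option (ℕ ⊕ ℕ))) (j : ℕ), some (Sum.inl j) ∈ A →
      Measurable[⨆ i ∈ A, m i] (ξ j) := by
    intro A j hj
    have : m (some (Sum.inl j)) ≤ ⨆ i ∈ A, m i := le_biSup m hj
    exact (comap_measurable (ξ j)).mono this le_rfl
  have hUm : ∀ (A : Set (Option (ℕ ⊕ ℕ))) (j : ℕ), some (Sum.inr j) ∈ A →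
      Measurable[⨆ i ∈ A, m i] (U j) := by
    intro A j hj
    have : m (some (Sum.inr j)) ≤ ⨆ i ∈ A, m i := le_biSup m hj
    exact (comap_measurable (U j)).mono this le_rfl
  have hVgen : ∀ n, Measurable[⨆ i ∈ S n, m i] (Xb n) →
      Measurable[⨆ i ∈ T n, m i] (fun ω => Xb n ω + h • bb (Xb n ω) (U n ω)) := by
    intro n hn
    have a1 : Measurable[⨆ i ∈ T n, m i] (Xb n) := hn.mono (hsub _ _ (hST n)) le_rfl
    have a2 := hUm (T n) n (Or.inr (Or.inr ⟨n, le_rfl, rfl⟩))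
    exact a1.add ((hbbmeas.comp (a1.prodMk a2)).const_smul h)
  have hXS : ∀ n, Measurable[⨆ i ∈ S n, m i] (Xb n) := by
    intro n
    induction n with
    | zero =>
      have : m none ≤ ⨆ i ∈ S 0, m i := le_biSup m (Or.inl rfl)
      exact (comap_measurable (Xb 0)).mono this le_rfl
    | succ n ih =>
      have a1 := (hVgen n ih).mono (hsub _ _ (hTS n)) le_rfl
      have a2 := hξm (S (n + 1)) (n + 1) (Or.inr (Or.inl ⟨n + 1, le_rfl, rfl⟩))
      have : Xb (n + 1) = fun ω => (Xb n ω + h • bb (Xb n ω) (U n ω))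
          + Real.sqrt h • ξ (n + 1) ω := funext (hrec n)
      rw [this]
      have a3 : Measurable[⨆ i ∈ S (n + 1), m i] (fun ω => Real.sqrt h • ξ (n + 1) ω) :=
        a2.const_smul (Real.sqrt h)
      exact a1.add a3
  have hle : ∀ A : Set (Option (ℕ ⊕ ℕ)), (⨆ i ∈ A, m i) ≤ (inferInstance : MeasurableSpace Ω) :=
    fun A => iSup₂_le fun i _ => hmle i
  have hXm : ∀ n, Measurable (Xb n) := fun n => (hXS n).mono (hle _) le_rfl
  have hVm : ∀ n, Measurable (fun ω => Xb n ω + h • bb (Xb n ω) (U n ω)) :=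
    fun n => (hVgen n (hXS n)).mono (hle _) le_rfl
  have hindU : ∀ n, IndepFun (Xb n) (U n) ℙ := by
    intro n
    rw [IndepFun_iff_Indep]
    have hdis : Disjoint (S n) {some (Sum.inr n)} := by
      rw [Set.disjoint_singleton_right]
      rintro (hi | ⟨j, hj, hi⟩ | ⟨j, hj, hi⟩)
      · simp at hi
      · simp at hi
      · simp at hi; omega
    have := indep_iSup_of_disjoint hmle hIndep hdis
    exact indep_of_indep_of_le_left (indep_of_indep_of_le_right this
      (hUm {some (Sum.inr n)} n rfl).comap_le) (hXS n).comap_le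
  have hindξ : ∀ n, IndepFun (fun ω => Xb n ω + h • bb (Xb n ω) (U n ω)) (ξ (n + 1)) ℙ := by
    intro n
    rw [IndepFun_iff_Indep]
    have hdis : Disjoint (T n) {some (Sum.inl (n + 1))} := by
      rw [Set.disjoint_singleton_right]
      rintro (hi | ⟨j, hj, hi⟩ | ⟨j, hj, hi⟩)
      · simp at hi
      · simp at hi; omega
      · simp at hi
    have := indep_iSup_of_disjoint hmle hIndep hdis
    exact indep_of_indep_of_le_left (indep_of_indep_of_le_right this
      (hξm {some (Sum.inl (n + 1))} (n + 1) rfl).comap_le) (hVgen n (hXS n)).comap_le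
  -- the induction
  have main : ∀ n, Integrable (fun ω => ‖Xb n ω‖ ^ 2) ℙ →
      ∫ ω, ‖Xb n ω‖ ^ 2 ∂ℙ ≤ ∫ ω, ‖Xb 0 ω‖ ^ 2 ∂ℙ + N / c := by
    intro n
    induction n with
    | zero => intro _; linarith
    | succ n ih =>
      intro hint
      have hrec' : (fun ω => ‖Xb (n + 1) ω‖ ^ 2) = fun ω =>
          ‖(Xb n ω + h • bb (Xb n ω) (U n ω)) + Real.sqrt h • ξ (n + 1) ω‖ ^ 2 := by
        funext ω; rw [hrec n ω]
      rw [hrec'] at hint ⊢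
      obtain ⟨hVint, hVeq⟩ := aux_noise ℙ _ (ξ (n + 1)) (hVm n) (hξmeas _)
        (hξlaw _ (by omega)) (hindξ n) h hh hint
      rw [hVeq]
      have hpair : Measurable (fun ω => (Xb n ω, U n ω)) := (hXm n).prodMk (hUmeas n)
      have hlawp := (indepFun_iff_map_prod_eq_prod_map_map (hXm n).aemeasurable
        (hUmeas n).aemeasurable).1 (hindU n)
      have : IsProbabilityMeasure (Measure.map (Xb n) (ℙ : Measure Ω)) :=
        Measure.isProbabilityMeasure_map (hXm n).aemeasurable
      have : IsProbabilityMeasure (Measure.map (U n) (ℙ : Measure Ω)) :=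
        Measure.isProbabilityMeasure_map (hUmeas n).aemeasurable
      have hGm : Measurable (fun p : EuclideanSpace ℝ (Fin d) × E =>
          ‖p.1 + h • bb p.1 p.2‖ ^ 2) :=
        ((measurable_fst.add (hbbmeas.const_smul h)).norm).pow_const 2
      have hbx : ∀ x, Measurable (bb x) := fun x => hbbmeas.comp measurable_prodMk_left
      obtain ⟨hX2, hbd⟩ := aux_drift b L K M σ h hL hh (by linarith) hLip
        (aux_lyap b L K R hL hK hR hLip hContr) bb hbbmeas
        (Measure.map (Xb n) ℙ) (Measure.map (U n) ℙ)
        (by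
          intro x
          rw [integral_map (hUmeas n).aemeasurable (hbx x).aestronglyMeasurable]
          exact hUnbiased x n)
        (by
          intro x
          rw [integral_map (hUmeas n).aemeasurable
            (((hbx x).sub_const _).norm.pow_const 2).aestronglyMeasurable]
          exact (hVar x n).trans (mul_le_of_le_one_right (by positivity) hpow))
        (by
          rw [← hlawp, integrable_map_measure hGm.aestronglyMeasurable hpair.aemeasurable]
          exact hVint)
      rw [← hlawp, integral_map hpair.aemeasurable hGm.aestronglyMeasurable,
        integral_map (hXm n).aemeasurable (by fun_prop)] at hbd
      rw [integrable_map_measure (by fun_prop) (hXm n).aemeasurable] at hX2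
      have hi := ih hX2
      have hen : 0 ≤ ∫ ω, ‖Xb n ω‖ ^ 2 := integral_nonneg fun ω => by positivity
      generalize (∫ ω, ‖Xb n ω‖ ^ 2) = e at hi hbd hen
      generalize (∫ ω, ‖Xb 0 ω‖ ^ 2) = e0 at hi he0 ⊢
      have hq : 0 ≤ 1 - 2 * h * c := by
        have : h * K ≤ h * L := mul_le_mul_of_nonneg_left hKL hh.le
        have : 0 ≤ h * (2 * h * L ^ 2 + h * σ ^ 2) := by positivity
        rw [hcdef]; nlinarith
      have hstep : (1 - h * K + 2 * h ^ 2 * L ^ 2 + h ^ 2 * σ ^ 2) * e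
          ≤ (1 - 2 * h * c) * e := by
        refine mul_le_mul_of_nonneg_right ?_ hen
        have : 0 ≤ h ^ 2 * (2 * L ^ 2 + σ ^ 2) := by positivity
        rw [hcdef]; nlinarith
      have hstep2 := mul_le_mul_of_nonneg_left hi hq
      have hNN : h * (2 * M + 2 * h * ‖b 0‖ ^ 2 + h * σ ^ 2) + h * d ≤ 2 * h * N := by
        have : 0 ≤ h * (2 * h * ‖b 0‖ ^ 2 + h * σ ^ 2 + d) := by positivity
        rw [hN]; nlinarith
      have hcN : c * (N / c) = N := by field_simp
      have hce : 0 ≤ h * c * e0 := by positivity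
      have : (1 - 2 * h * c) * (e0 + N / c) = e0 + N / c - 2 * (h * c * e0) - 2 * h * N := by
        rw [← hcN]; field_simp; ring
      linarith
  by_cases hint : Integrable (fun ω => ‖Xb k ω‖ ^ 2) ℙ
  · exact main k hint
  · rw [integral_undef hint]; linarith
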